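/- Let B ∈ ℂ^{M×M} and A ∈ ℂ^{N×N} be Hermitian matrices with eigenvalues μ₁, …, μ_M and λ₁, …, λ_N respectively, and suppose all MN products μᵢ·λⱼ are pairwise distinct. Let L ∈ ℂ^{MN×MN} be a Hermitian matrix. Then L commutes with the Kronecker product B ⊗ A if and only if L commutes with both B ⊗ I_N and I_M ⊗ A. -/

import Mathlib

open Matrix Kronecker

/-- A matrix commuting with a diagonalizable matrix of simple spectrum commutes with every
matrix diagonalized by the same basis. -/
theorem commute_of_simple_diag {n : Type*} [Fintype n] [DecidableEq n]
    (V W L : Matrix n n ℂ) (hVW : V * W = 1) (hWV : W * V = 1) (d e : n → ℂ)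
    (hd : Function.Injective d)
    (h : L * (V * diagonal d * W) = (V * diagonal d * W) * L) :
    L * (V * diagonal e * W) = (V * diagonal e * W) * L := by
  have h1 : (W * L * V) * diagonal d = diagonal d * (W * L * V) := by
    calc (W * L * V) * diagonal d = W * (L * (V * diagonal d * W)) * V := by
          simp only [Matrix.mul_assoc, hWV, Matrix.mul_one]
      _ = W * ((V * diagonal d * W) * L) * V := by rw [h]
      _ = (W * V) * diagonal d * (W * L * V) := by simp only [Matrix.mul_assoc]
      _ = _ := by rw [hWV, Matrix.one_mul]
  have h2 : (W * L * V) * diagonal e = diagonal e * (W * L * V) := by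
    ext i j
    have hij := congrFun (congrFun h1 i) j
    rw [mul_diagonal, diagonal_mul] at hij ⊢
    by_cases hh : i = j
    · subst hh; ring
    · have hne : d j - d i ≠ 0 := sub_ne_zero.mpr fun hc => hh (hd hc).symm
      have hz : (W * L * V) i j = 0 := by
        have : (W * L * V) i j * (d j - d i) = 0 := by linear_combination hij
        exact (mul_eq_zero.mp this).resolve_right hne
      rw [hz]; ring
  calc L * (V * diagonal e * W) = (V * W) * L * (V * diagonal e * W) := by
        rw [hVW, Matrix.one_mul]
    _ = V * ((W * L * V) * diagonal e) * W := by simp only [Matrix.mul_assoc]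
    _ = V * (diagonal e * (W * L * V)) * W := by rw [h2]
    _ = (V * diagonal e * W) * L * (V * W) := by simp only [Matrix.mul_assoc]
    _ = _ := by rw [hVW, Matrix.mul_one]

theorem hermitian_diag_form {n : Type*} [Fintype n] [DecidableEq n]
    (A : Matrix n n ℂ) (hA : A.IsHermitian) :
    ∃ U W : Matrix n n ℂ, U * W = 1 ∧ W * U = 1 ∧
      A = U * diagonal (fun i => (hA.eigenvalues i : ℂ)) * W := by
  refine ⟨hA.eigenvectorUnitary, star (hA.eigenvectorUnitary : Matrix n n ℂ),
    Unitary.mul_star_self_of_mem hA.eigenvectorUnitary.2,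
    Unitary.star_mul_self_of_mem hA.eigenvectorUnitary.2, ?_⟩
  have := hA.spectral_theorem
  rw [Unitary.conjStarAlgAut_apply] at this
  exact this

theorem weakly_iff_aux {m n : Type*} [Fintype m] [Fintype n] [DecidableEq m] [DecidableEq n]
    (B : Matrix m m ℂ) (A : Matrix n n ℂ)
    (hB : B.IsHermitian) (hA : A.IsHermitian)
    (hdist : Function.Injective
      (fun p : m × n => hB.eigenvalues p.1 * hA.eigenvalues p.2))
    (L : Matrix (m × n) (m × n) ℂ) :
    L * (B ⊗ₖ A) = (B ⊗ₖ A) * L ↔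
      (L * (B ⊗ₖ (1 : Matrix n n ℂ)) = (B ⊗ₖ (1 : Matrix n n ℂ)) * L ∧
       L * ((1 : Matrix m m ℂ) ⊗ₖ A) = ((1 : Matrix m m ℂ) ⊗ₖ A) * L) := by
  constructor
  · intro h
    obtain ⟨U, U', hU, hU', eB⟩ := hermitian_diag_form B hB
    obtain ⟨W, W', hW, hW', eA⟩ := hermitian_diag_form A hA
    set b : m → ℂ := fun i => (hB.eigenvalues i : ℂ) with hb
    set a : n → ℂ := fun i => (hA.eigenvalues i : ℂ) with ha
    have hV : (U ⊗ₖ W) * (U' ⊗ₖ W') = 1 := by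
      rw [← mul_kronecker_mul, hU, hW, one_kronecker_one]
    have hV' : (U' ⊗ₖ W') * (U ⊗ₖ W) = 1 := by
      rw [← mul_kronecker_mul, hU', hW', one_kronecker_one]
    have key : ∀ (x : m → ℂ) (y : n → ℂ),
        (U * diagonal x * U') ⊗ₖ (W * diagonal y * W') =
          (U ⊗ₖ W) * diagonal (fun p : m × n => x p.1 * y p.2) * (U' ⊗ₖ W') := by
      intro x y
      rw [mul_kronecker_mul, mul_kronecker_mul, diagonal_kronecker_diagonal]
    have hinj : Function.Injective (fun p : m × n => b p.1 * a p.2) := by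
      intro p q hpq
      apply hdist
      simp only [hb, ha] at hpq
      exact_mod_cast hpq
    have e1 : (1 : Matrix m m ℂ) = U * diagonal (fun _ => 1) * U' := by
      rw [diagonal_one, Matrix.mul_one, hU]
    have e2 : (1 : Matrix n n ℂ) = W * diagonal (fun _ => 1) * W' := by
      rw [diagonal_one, Matrix.mul_one, hW]
    have kBA : B ⊗ₖ A = _ := (congrArg₂ (fun X Y => X ⊗ₖ Y) eB eA).trans (key b a)
    have kB1 : B ⊗ₖ (1 : Matrix n n ℂ) = _ :=
      (congrArg₂ (fun X Y => X ⊗ₖ Y) eB e2).trans (key b _)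
    have k1A : (1 : Matrix m m ℂ) ⊗ₖ A = _ :=
      (congrArg₂ (fun X Y => X ⊗ₖ Y) e1 eA).trans (key _ a)
    rw [kBA] at h
    rw [kB1, k1A]
    exact ⟨commute_of_simple_diag _ _ L hV hV' _ _ hinj h,
      commute_of_simple_diag _ _ L hV hV' _ _ hinj h⟩
  · rintro ⟨h1, h2⟩
    have e : B ⊗ₖ A = (B ⊗ₖ (1 : Matrix n n ℂ)) * ((1 : Matrix m m ℂ) ⊗ₖ A) := by
      rw [← mul_kronecker_mul, Matrix.mul_one, Matrix.one_mul]
    rw [e, ← Matrix.mul_assoc, h1, Matrix.mul_assoc, h2, Matrix.mul_assoc]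


/-- **Weak shift invariance is equivalent to shift invariance for self-adjoint
filters.** Let `B` and `A` be Hermitian matrices whose `MN` eigenvalue products
`μᵢ·λⱼ` are pairwise distinct, and let `L` be a Hermitian matrix. Then `L`
commutes with `B ⊗ A` if and only if it commutes with both `B ⊗ I_N` and
`I_M ⊗ A`. -/
theorem weakly_shift_invariant_iff_shift_invariant {M N : ℕ}
    [DecidableEq (Fin M)] [DecidableEq (Fin N)]
    (B : Matrix (Fin M) (Fin M) ℂ) (A : Matrix (Fin N) (Fin N) ℂ)
    (hB : B.IsHermitian) (hA : A.IsHermitian)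
    (hdist : Function.Injective
      (fun p : Fin M × Fin N => hB.eigenvalues p.1 * hA.eigenvalues p.2))
    (L : Matrix (Fin M × Fin N) (Fin M × Fin N) ℂ)
    (hL : L.IsHermitian) :
    L * (B ⊗ₖ A) = (B ⊗ₖ A) * L ↔
      (L * (B ⊗ₖ (1 : Matrix (Fin N) (Fin N) ℂ)) =
          (B ⊗ₖ (1 : Matrix (Fin N) (Fin N) ℂ)) * L ∧
       L * ((1 : Matrix (Fin M) (Fin M) ℂ) ⊗ₖ A) =
          ((1 : Matrix (Fin M) (Fin M) ℂ) ⊗ₖ A) * L) := by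
  exact weakly_iff_aux B A hB hA hdist L
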